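/- Assume that for each n the coefficients of P_n(·; z) are twice differentiable functions of z on (0, ∞), and let σ_n(z) be minus the coefficient of x^{n−1} in P_n(x; z). Then for every n ≥ 0, y = σ_n is a solution on (0, ∞) of the nonlinear ODE (z·y″)² + 4·(y′)²·(n − y′)·(n + α − y′) − [n·(n + α) − y + (2·y′ + z − 2n − α)·y′]² = 0 (a form of the Painlevé V equation). -/

import Mathlib

open MeasureTheory intervalIntegral Polynomial

/-!
Let `L t` be the functional truncated at `t` and `h n = L z (P n * P n)`. Write
`X * P n = P (n + 1) + b n * P n + a n * P (n - 1)`, and let `R n = w z * P n z ^ 2 / h n` and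
`r n = w z * P n z * P (n - 1) z / h (n - 1)` be the normalized values at the endpoint, where `w` is
the weight. Three facts determine everything.

* The derivative of `L t` at `z` is `w z` times evaluation at `z`. By orthogonality, `y = σ n`
  satisfies `y' = r n`, and `(a n)' = a n * (R n - R (n - 1))`.
* The Pearson equation of the weight, tested on `P n * P n` and on `P n * P (n - 1)`, gives
  `z * R n = 2 * n + 1 + α - b n` and `a n = y - z * r n`.
* The recurrence evaluated at `z` gives `r (n + 1) + r n = (z - b n) * R n`, and the definitions
  give `r n ^ 2 = a n * R n * R (n - 1)`.

The last two imply `a n * (R n + R (n - 1)) = n * (n + α) - (2 * n + α) * r n - a n` by induction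
on `n`, and the first two give `z * y'' = -a n * (R n - R (n - 1))`. The `σ`-form is then the
identity `(R n - R (n - 1)) ^ 2 + 4 * R n * R (n - 1) = (R n + R (n - 1)) ^ 2` multiplied by
`a n ^ 2`.

For the derivatives, note that `P n` is monic at both `t` and `z`, so
`L t (P n t * P n t) - L z (P n z * P n z) = (L t - L z) (P n t * P n z)` (and similarly for `σ n`).
Hence continuity of the coefficients of `P n`, which the recurrence yields by induction, upgrades to
differentiability of `h n` and `σ n`.
-/

/-- Monic orthogonal polynomial sequences in Chihara's sense: `L (P n * P n)` only has to be
nonzero, so `L` may be any quasi-definite moment functional over a field. -/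
structure IsMonicOrthogonal {K : Type*} [Field K] (L : K[X] →ₗ[K] K) (P : ℕ → K[X]) : Prop where
  monic (n : ℕ) : (P n).Monic
  natDegree_eq (n : ℕ) : (P n).natDegree = n
  map_mul_of_ne {m n : ℕ} (h : m ≠ n) : L (P m * P n) = 0
  map_mul_self_ne_zero (n : ℕ) : L (P n * P n) ≠ 0

section Recurrence

variable {K : Type*} [Field K]

/-- The coefficient `b n` of `P n` in the three-term recurrence
`X * P n = P (n + 1) + b n * P n + a n * P (n - 1)`. -/
def jacobiDiag (P : ℕ → K[X]) (n : ℕ) : K :=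
  (P n).nextCoeff - (P (n + 1)).nextCoeff

/-- The coefficient `a n` of `P (n - 1)` in the three-term recurrence
`X * P n = P (n + 1) + b n * P n + a n * P (n - 1)`, with the convention `a 0 = 0`. -/
noncomputable def jacobiSubdiag (L : K[X] →ₗ[K] K) (P : ℕ → K[X]) : ℕ → K
  | 0 => 0
  | n + 1 => L (P (n + 1) * P (n + 1)) / L (P n * P n)

lemma map_C_mul (L : K[X] →ₗ[K] K) (c : K) (p : K[X]) : L (C c * p) = c * L p := by
  rw [← smul_eq_C_mul, map_smul, smul_eq_mul]

lemma coeff_X_mul_derivative (p : K[X]) (k : ℕ) : (X * derivative p).coeff k = k * p.coeff k := by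
  cases k with
  | zero => simp
  | succ k => rw [coeff_X_mul, coeff_derivative, Nat.cast_succ, mul_comm]

lemma natDegree_X_mul_derivative_le (p : K[X]) : (X * derivative p).natDegree ≤ p.natDegree :=
  natDegree_le_iff_coeff_eq_zero.mpr fun k hk ↦ by
    rw [coeff_X_mul_derivative, coeff_eq_zero_of_natDegree_lt hk, mul_zero]

namespace IsMonicOrthogonal

variable {L : K[X] →ₗ[K] K} {P : ℕ → K[X]}

lemma degree_eq (hP : IsMonicOrthogonal L P) (n : ℕ) : (P n).degree = n := by
  rw [degree_eq_natDegree (hP.monic n).ne_zero, hP.natDegree_eq]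

lemma coeff_self (hP : IsMonicOrthogonal L P) (n : ℕ) : (P n).coeff n = 1 := by
  simpa only [hP.natDegree_eq] using (hP.monic n).coeff_natDegree

lemma coeff_of_lt (hP : IsMonicOrthogonal L P) {n k : ℕ} (h : n < k) : (P n).coeff k = 0 :=
  coeff_eq_zero_of_natDegree_lt (by rwa [hP.natDegree_eq])

lemma zero_eq_one (hP : IsMonicOrthogonal L P) : P 0 = 1 :=
  (hP.monic 0).natDegree_eq_zero.mp (hP.natDegree_eq 0)

lemma nextCoeff_zero (hP : IsMonicOrthogonal L P) : (P 0).nextCoeff = 0 := by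
  rw [hP.zero_eq_one, ← C_1, nextCoeff_C_eq_zero]

lemma nextCoeff_succ (hP : IsMonicOrthogonal L P) (n : ℕ) :
    (P (n + 1)).nextCoeff = (P (n + 1)).coeff n := by
  simp [nextCoeff, hP.natDegree_eq]

lemma coeff_X_mul_self (hP : IsMonicOrthogonal L P) (n : ℕ) :
    (X * P n).coeff n = (P n).nextCoeff := by
  cases n with
  | zero => rw [hP.nextCoeff_zero, coeff_X_mul_zero]
  | succ n => rw [coeff_X_mul, hP.nextCoeff_succ]

lemma natDegree_X_mul (hP : IsMonicOrthogonal L P) (n : ℕ) : (X * P n).natDegree = n + 1 := by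
  rw [Polynomial.natDegree_X_mul (hP.monic n).ne_zero, hP.natDegree_eq]

lemma map_mul_of_degree_lt (hP : IsMonicOrthogonal L P) {n : ℕ} {q : K[X]} (hq : q.degree < n) :
    L (P n * q) = 0 := by
  let S : Sequence K := ⟨P, hP.degree_eq⟩
  have hspan : q ∈ Submodule.span K (S '' Set.Iio n) := by
    rw [S.span_degreeLT fun i _ ↦ (hP.monic i).leadingCoeff.symm ▸ isUnit_one]
    exact mem_degreeLT.mpr hq
  clear hq
  induction hspan using Submodule.span_induction with
  | mem _ hx =>
    obtain ⟨k, hk, rfl⟩ := hx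
    exact hP.map_mul_of_ne (Set.mem_Iio.mp hk).ne'
  | zero => rw [mul_zero, map_zero]
  | add p q _ _ hp hq => rw [mul_add, map_add, hp, hq, add_zero]
  | smul c p _ hp => rw [mul_smul_comm, map_smul, hp, smul_zero]

lemma map_mul_of_natDegree_le (hP : IsMonicOrthogonal L P) {n : ℕ} {q : K[X]}
    (hq : q.natDegree ≤ n) : L (P n * q) = q.coeff n * L (P n * P n) := by
  have hdeg : (q - C (q.coeff n) * P n).degree < n := by
    refine (degree_lt_iff_coeff_zero _ _).mpr fun k hk ↦ ?_
    rw [coeff_sub, coeff_C_mul]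
    rcases hk.eq_or_lt with rfl | hk
    · rw [hP.coeff_self, mul_one, sub_self]
    · rw [hP.coeff_of_lt hk, coeff_eq_zero_of_natDegree_lt (hq.trans_lt hk), mul_zero, sub_zero]
  have h := hP.map_mul_of_degree_lt hdeg
  rwa [mul_sub, map_sub, mul_left_comm, map_C_mul, sub_eq_zero] at h

lemma map_mul_of_natDegree_le_succ (hP : IsMonicOrthogonal L P) {n : ℕ} {q : K[X]}
    (hq : q.natDegree ≤ n + 1) :
    L (P n * q) = (q.coeff n - q.coeff (n + 1) * (P (n + 1)).nextCoeff) * L (P n * P n) := by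
  have hdeg : (q - C (q.coeff (n + 1)) * P (n + 1)).natDegree ≤ n := by
    refine natDegree_le_iff_coeff_eq_zero.mpr fun k hk ↦ ?_
    rw [coeff_sub, coeff_C_mul]
    rcases (Nat.succ_le_of_lt hk).eq_or_lt with rfl | hk
    · rw [hP.coeff_self, mul_one, sub_self]
    · rw [hP.coeff_of_lt hk, coeff_eq_zero_of_natDegree_lt (hq.trans_lt hk), mul_zero, sub_zero]
  have h := hP.map_mul_of_natDegree_le hdeg
  rwa [mul_sub, map_sub, mul_left_comm, map_C_mul, hP.map_mul_of_ne n.lt_succ_self.ne, mul_zero,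
    sub_zero, coeff_sub, coeff_C_mul, ← hP.nextCoeff_succ] at h

lemma map_mul_X_mul_self (hP : IsMonicOrthogonal L P) (n : ℕ) :
    L (P n * (X * P n)) = jacobiDiag P n * L (P n * P n) := by
  rw [hP.map_mul_of_natDegree_le_succ (hP.natDegree_X_mul n).le, coeff_X_mul, hP.coeff_self,
    hP.coeff_X_mul_self, one_mul, jacobiDiag]

lemma map_succ_mul_X_mul (hP : IsMonicOrthogonal L P) (n : ℕ) :
    L (P (n + 1) * (X * P n)) = L (P (n + 1) * P (n + 1)) := by
  rw [hP.map_mul_of_natDegree_le (hP.natDegree_X_mul n).le, coeff_X_mul, hP.coeff_self, one_mul]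

lemma eq_zero_of_map_mul_natDegree (hP : IsMonicOrthogonal L P) {q : K[X]}
    (h : L (P q.natDegree * q) = 0) : q = 0 := by
  rw [hP.map_mul_of_natDegree_le le_rfl] at h
  exact leadingCoeff_eq_zero.mp
    ((mul_eq_zero.mp h).resolve_right (hP.map_mul_self_ne_zero _))

lemma natDegree_X_mul_sub_le (hP : IsMonicOrthogonal L P) (n : ℕ) :
    (X * P n - P (n + 1)).natDegree ≤ n :=
  natDegree_le_iff_coeff_eq_zero.mpr fun k hk ↦ by
    rcases (Nat.succ_le_of_lt hk).eq_or_lt with rfl | hk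
    · rw [coeff_sub, coeff_X_mul, hP.coeff_self, hP.coeff_self, sub_self]
    · rw [coeff_sub, hP.coeff_of_lt hk, sub_zero]
      exact coeff_eq_zero_of_natDegree_lt (by rwa [hP.natDegree_X_mul])

lemma map_mul_X_mul_eq_jacobiSubdiag (hP : IsMonicOrthogonal L P) {k n : ℕ} (hk : k < n) :
    L (P k * (X * P n)) = jacobiSubdiag L P n * L (P k * P (n - 1)) := by
  obtain ⟨n, rfl⟩ := Nat.exists_eq_succ_of_ne_zero hk.ne_bot
  rw [Nat.succ_eq_add_one, Nat.add_sub_cancel, mul_left_comm, ← mul_assoc, mul_comm]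
  rcases (Nat.le_of_lt_succ hk).eq_or_lt with rfl | hk
  · rw [hP.map_succ_mul_X_mul, jacobiSubdiag, div_mul_cancel₀ _ (hP.map_mul_self_ne_zero _)]
  · rw [hP.map_mul_of_ne hk.ne, mul_zero]
    refine hP.map_mul_of_degree_lt (degree_lt_iff_coeff_zero _ _ |>.mpr fun j hj ↦ ?_)
    exact coeff_eq_zero_of_natDegree_lt (by rw [hP.natDegree_X_mul]; lia)

theorem X_mul_eq (hP : IsMonicOrthogonal L P) (n : ℕ) :
    X * P n = P (n + 1) + C (jacobiDiag P n) * P n + C (jacobiSubdiag L P n) * P (n - 1) := by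
  set T := X * P n - P (n + 1) - C (jacobiDiag P n) * P n - C (jacobiSubdiag L P n) * P (n - 1)
    with hT
  have hdeg : T.natDegree ≤ n := by
    refine (natDegree_sub_le _ _).trans
      (max_le ((natDegree_sub_le _ _).trans (max_le (hP.natDegree_X_mul_sub_le n) ?_)) ?_)
    · exact (natDegree_C_mul_le _ _).trans (hP.natDegree_eq n).le
    · exact (natDegree_C_mul_le _ _).trans ((hP.natDegree_eq _).trans_le (n.sub_le 1))
  have horth (k : ℕ) (hk : k ≤ n) : L (P k * T) = 0 := by
    simp only [hT, mul_sub, map_sub, mul_left_comm _ (C _), map_C_mul]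
    rw [hP.map_mul_of_ne (Nat.lt_succ_of_le hk).ne, sub_zero]
    rcases hk.eq_or_lt with rfl | hk
    · rw [hP.map_mul_X_mul_self, sub_self, zero_sub, neg_eq_zero]
      cases k with
      | zero => rw [jacobiSubdiag, zero_mul]
      | succ k => rw [Nat.add_sub_cancel, hP.map_mul_of_ne k.succ_ne_self, mul_zero]
    · rw [hP.map_mul_X_mul_eq_jacobiSubdiag hk, hP.map_mul_of_ne hk.ne, mul_zero, sub_zero,
        sub_self]
  linear_combination hP.eq_zero_of_map_mul_natDegree (horth _ hdeg)

lemma map_mul_X_mul_derivative_self (hP : IsMonicOrthogonal L P) (n : ℕ) :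
    L (P n * (X * derivative (P n))) = n * L (P n * P n) := by
  rw [hP.map_mul_of_natDegree_le ((natDegree_X_mul_derivative_le _).trans (hP.natDegree_eq n).le),
    coeff_X_mul_derivative, hP.coeff_self, mul_one]

lemma map_succ_mul_X_mul_derivative (hP : IsMonicOrthogonal L P) (n : ℕ) :
    L (P (n + 1) * (X * derivative (P n))) = 0 := by
  have hdeg := (natDegree_X_mul_derivative_le (P n)).trans (hP.natDegree_eq n).le
  rw [hP.map_mul_of_natDegree_le (hdeg.trans n.le_succ),
    coeff_eq_zero_of_natDegree_lt (Nat.lt_succ_of_le hdeg), zero_mul]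

lemma map_mul_X_mul_derivative_succ (hP : IsMonicOrthogonal L P) (n : ℕ) :
    L (P n * (X * derivative (P (n + 1)))) = -(P (n + 1)).nextCoeff * L (P n * P n) := by
  rw [hP.map_mul_of_natDegree_le_succ
      ((natDegree_X_mul_derivative_le _).trans (hP.natDegree_eq _).le),
    coeff_X_mul_derivative, coeff_X_mul_derivative, hP.coeff_self, hP.nextCoeff_succ]
  push_cast
  ring

end IsMonicOrthogonal

end Recurrence

section Ladder

variable {K : Type*} [Field K]

/-- Normalized diagonal matrix entry `R n` of the functional `L'` in the basis `P`. For the endpoint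
evaluation `L'` this is the ladder-operator quantity `R n`. -/
noncomputable def ladderDiag (L L' : K[X] →ₗ[K] K) (P : ℕ → K[X]) (n : ℕ) : K :=
  L' (P n * P n) / L (P n * P n)

/-- Normalized subdiagonal matrix entry `r n` of the functional `L'` in the basis `P`, with the
convention `r 0 = 0`. For the endpoint evaluation `L'` this is the ladder-operator quantity
`r n`. -/
noncomputable def ladderSub (L L' : K[X] →ₗ[K] K) (P : ℕ → K[X]) : ℕ → K
  | 0 => 0
  | n + 1 => L' (P (n + 1) * P n) / L (P n * P n)

/-- The functional of a point mass `w` at `z`: the derivative in `z` of `∫ x in a..z, p x * W x`,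
where `w = W z`. -/
noncomputable def pointMass (w z : K) : K[X] →ₗ[K] K := w • leval z

@[simp]
lemma pointMass_apply (w z : K) (p : K[X]) : pointMass w z p = w * p.eval z := rfl

/-- The Pearson equation of the weight `x ^ α * exp (-x)` truncated at `z`, where `w` is the
value of the weight at `z`. -/
def IsTruncatedLaguerre (α z w : K) (L : K[X] →ₗ[K] K) : Prop :=
  ∀ f : K[X], L ((C (1 + α) - X) * f + X * derivative f) = z * pointMass w z f

namespace IsMonicOrthogonal

variable {L : K[X] →ₗ[K] K} {P : ℕ → K[X]} {α z w : K}

local notation "𝓪" => jacobiSubdiag L P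
local notation "𝓫" => jacobiDiag P
local notation "𝓡" => ladderDiag L (pointMass w z) P
local notation "𝓻" => ladderSub L (pointMass w z) P

lemma ladderSub_succ_add (hP : IsMonicOrthogonal L P) (n : ℕ) :
    𝓻 (n + 1) + 𝓻 n = (z - 𝓫 n) * 𝓡 n := by
  have hrec := congrArg (eval z) (hP.X_mul_eq n)
  cases n with
  | zero =>
    simp only [jacobiSubdiag, eval_add, eval_mul, eval_X, eval_C, zero_mul, add_zero] at hrec
    simp only [ladderSub, ladderDiag, pointMass_apply, eval_mul]
    linear_combination -w * (P 0).eval z / L (P 0 * P 0) * hrec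
  | succ n =>
    have h₀ := hP.map_mul_self_ne_zero n
    have h₁ := hP.map_mul_self_ne_zero (n + 1)
    simp only [jacobiSubdiag, eval_add, eval_mul, eval_X, eval_C, Nat.add_sub_cancel] at hrec
    simp only [ladderSub, ladderDiag, pointMass_apply, eval_mul]
    field_simp at hrec ⊢
    linear_combination -w * (P (n + 1)).eval z * hrec

lemma ladderSub_succ_sq (hP : IsMonicOrthogonal L P) (n : ℕ) :
    𝓻 (n + 1) ^ 2 = 𝓪 (n + 1) * 𝓡 (n + 1) * 𝓡 n := by
  have h₀ := hP.map_mul_self_ne_zero n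
  have h₁ := hP.map_mul_self_ne_zero (n + 1)
  simp only [ladderSub, ladderDiag, jacobiSubdiag, pointMass_apply, eval_mul]
  field_simp

lemma ladderDiag_ne_zero (hP : IsMonicOrthogonal L P) (hw : w ≠ 0) {n : ℕ}
    (hz : (P n).eval z ≠ 0) : 𝓡 n ≠ 0 := by
  rw [ladderDiag, pointMass_apply, eval_mul]
  exact div_ne_zero (mul_ne_zero hw (mul_ne_zero hz hz)) (hP.map_mul_self_ne_zero n)

lemma mul_ladderDiag (hP : IsMonicOrthogonal L P) (hL : IsTruncatedLaguerre α z w L) (n : ℕ) :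
    z * 𝓡 n = 2 * n + 1 + α - 𝓫 n := by
  have hLeibniz : (C (1 + α) - X) * (P n * P n) + X * derivative (P n * P n) =
      C (1 + α) * (P n * P n) - P n * (X * P n) + P n * (X * derivative (P n)) +
        P n * (X * derivative (P n)) := by
    rw [derivative_mul]
    ring
  have hPearson := hL (P n * P n)
  rw [hLeibniz, map_add, map_add, map_sub, map_C_mul, hP.map_mul_X_mul_self,
    hP.map_mul_X_mul_derivative_self] at hPearson
  rw [ladderDiag, ← mul_div_assoc, ← hPearson, div_eq_iff (hP.map_mul_self_ne_zero n)]
  ring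

lemma jacobiSubdiag_eq (hP : IsMonicOrthogonal L P) (hL : IsTruncatedLaguerre α z w L) (n : ℕ) :
    𝓪 n = -(P n).nextCoeff - z * 𝓻 n := by
  cases n with
  | zero => rw [jacobiSubdiag, ladderSub, hP.nextCoeff_zero, neg_zero, mul_zero, sub_zero]
  | succ n =>
    have hLeibniz : (C (1 + α) - X) * (P (n + 1) * P n) + X * derivative (P (n + 1) * P n) =
        C (1 + α) * (P (n + 1) * P n) - P (n + 1) * (X * P n) +
          P n * (X * derivative (P (n + 1))) + P (n + 1) * (X * derivative (P n)) := by
      rw [derivative_mul]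
      ring
    have hPearson := hL (P (n + 1) * P n)
    rw [hLeibniz, map_add, map_add, map_sub, map_C_mul, hP.map_mul_of_ne n.succ_ne_self,
      hP.map_succ_mul_X_mul, hP.map_mul_X_mul_derivative_succ,
      hP.map_succ_mul_X_mul_derivative] at hPearson
    rw [jacobiSubdiag, ladderSub, ← mul_div_assoc, ← hPearson]
    field [hP.map_mul_self_ne_zero n]

lemma jacobiSubdiag_succ_mul_ladderDiag_add_of_quadratic (hP : IsMonicOrthogonal L P)
    (hL : IsTruncatedLaguerre α z w L) {n : ℕ} (hR : 𝓡 n ≠ 0)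
    (hquad : 𝓪 n * 𝓡 n ^ 2 + 𝓻 n ^ 2 =
      𝓡 n * (n * (n + α) - (2 * n + α) * 𝓻 n - 𝓪 n)) :
    𝓪 (n + 1) * (𝓡 (n + 1) + 𝓡 n) =
      (n + 1 : ℕ) * ((n + 1 : ℕ) + α) - (2 * (n + 1 : ℕ) + α) * 𝓻 (n + 1) - 𝓪 (n + 1) := by
  have hsq := hP.ladderSub_succ_sq (z := z) (w := w) n
  have hα : α = z * 𝓡 n + 𝓫 n - 2 * n - 1 := by
    rw [hP.mul_ladderDiag hL]
    ring
  have hr : 𝓻 (n + 1) = (z - 𝓫 n) * 𝓡 n - 𝓻 n :=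
    eq_sub_of_add_eq (hP.ladderSub_succ_add n)
  have ha : 𝓪 (n + 1) = 𝓪 n + 𝓫 n - z * (𝓻 (n + 1) - 𝓻 n) := by
    rw [hP.jacobiSubdiag_eq hL, hP.jacobiSubdiag_eq hL, jacobiDiag]
    ring
  refine mul_left_cancel₀ hR ?_
  rw [hα] at hquad ⊢
  rw [hr] at ha hsq ⊢
  rw [ha] at hsq ⊢
  push_cast
  linear_combination hquad - hsq

lemma jacobiSubdiag_mul_ladderDiag_sq_add_ladderSub_sq (hP : IsMonicOrthogonal L P)
    (hL : IsTruncatedLaguerre α z w L) (hR : ∀ n, 𝓡 n ≠ 0) (n : ℕ) :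
    𝓪 n * 𝓡 n ^ 2 + 𝓻 n ^ 2 = 𝓡 n * (n * (n + α) - (2 * n + α) * 𝓻 n - 𝓪 n) := by
  induction n with
  | zero => simp [jacobiSubdiag, ladderSub]
  | succ n ih =>
    rw [hP.ladderSub_succ_sq, ← hP.jacobiSubdiag_succ_mul_ladderDiag_add_of_quadratic hL (hR n) ih]
    ring

theorem jacobiSubdiag_succ_mul_ladderDiag_add (hP : IsMonicOrthogonal L P)
    (hL : IsTruncatedLaguerre α z w L) (hR : ∀ n, 𝓡 n ≠ 0) (n : ℕ) :
    𝓪 (n + 1) * (𝓡 (n + 1) + 𝓡 n) =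
      (n + 1 : ℕ) * ((n + 1 : ℕ) + α) - (2 * (n + 1 : ℕ) + α) * 𝓻 (n + 1) - 𝓪 (n + 1) :=
  hP.jacobiSubdiag_succ_mul_ladderDiag_add_of_quadratic hL (hR n)
    (hP.jacobiSubdiag_mul_ladderDiag_sq_add_ladderSub_sq hL hR n)

end IsMonicOrthogonal

end Ladder

section Deformation

open Filter Topology

lemma map_eq_sum_range {R : Type*} [CommSemiring R] (L : R[X] →ₗ[R] R) {q : R[X]} {N : ℕ}
    (hq : q.natDegree ≤ N) : L q = ∑ i ∈ Finset.range (N + 1), q.coeff i * L (X ^ i) := by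
  conv_lhs => rw [q.as_sum_range_C_mul_X_pow' (Nat.lt_succ_of_le hq), map_sum]
  simp only [← smul_eq_C_mul, map_smul, smul_eq_mul]

lemma continuousAt_coeff_mul {T R : Type*} [TopologicalSpace T] [Semiring R] [TopologicalSpace R]
    [IsTopologicalSemiring R] {p q : T → R[X]} {z : T}
    (hp : ∀ i, ContinuousAt (fun t ↦ (p t).coeff i) z)
    (hq : ∀ i, ContinuousAt (fun t ↦ (q t).coeff i) z) (i : ℕ) :
    ContinuousAt (fun t ↦ (p t * q t).coeff i) z := by
  simp only [coeff_mul]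
  exact tendsto_finsetSum _ fun ij _ ↦ (hp ij.1).mul (hq ij.2)

lemma continuousAt_map {T R : Type*} [TopologicalSpace T] [CommSemiring R] [TopologicalSpace R]
    [IsTopologicalSemiring R] {L : T → R[X] →ₗ[R] R} {q : T → R[X]} {N : ℕ} {z : T}
    (hL : ∀ p, ContinuousAt (fun t ↦ L t p) z) (hdeg : ∀ᶠ t in 𝓝 z, (q t).natDegree ≤ N)
    (hq : ∀ i, ContinuousAt (fun t ↦ (q t).coeff i) z) :
    ContinuousAt (fun t ↦ L t (q t)) z := by
  have hsum : ContinuousAt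
      (fun t ↦ ∑ i ∈ Finset.range (N + 1), (q t).coeff i * L t (X ^ i)) z :=
    tendsto_finsetSum _ fun i _ ↦ (hq i).mul (hL (X ^ i))
  exact hsum.congr (hdeg.mono fun t ht ↦ (map_eq_sum_range (L t) ht).symm)

variable {𝕜 : Type*} [NontriviallyNormedField 𝕜]

lemma hasDerivAt_mul_sub_of_continuousAt {c g : 𝕜 → 𝕜} {g' z : 𝕜} (hc : ContinuousAt c z)
    (hg : HasDerivAt g g' z) : HasDerivAt (fun t ↦ c t * (g t - g z)) (c z * g') z := by
  rw [hasDerivAt_iff_tendsto_slope] at hg ⊢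
  refine ((hc.tendsto.mono_left nhdsWithin_le_nhds).mul hg).congr fun t ↦ ?_
  simp only [slope_def_field, sub_self, mul_zero, sub_zero, mul_div_assoc]

lemma hasDerivAt_map_sub_map {L : 𝕜 → 𝕜[X] →ₗ[𝕜] 𝕜} {L' : 𝕜[X] →ₗ[𝕜] 𝕜} {q : 𝕜 → 𝕜[X]} {N : ℕ}
    {z : 𝕜} (hL : ∀ p, HasDerivAt (fun t ↦ L t p) (L' p) z)
    (hdeg : ∀ᶠ t in 𝓝 z, (q t).natDegree ≤ N)
    (hq : ∀ i, ContinuousAt (fun t ↦ (q t).coeff i) z) :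
    HasDerivAt (fun t ↦ L t (q t) - L z (q t)) (L' (q z)) z := by
  have hsum : HasDerivAt
      (fun t ↦ ∑ i ∈ Finset.range (N + 1), (q t).coeff i * (L t (X ^ i) - L z (X ^ i)))
      (∑ i ∈ Finset.range (N + 1), (q z).coeff i * L' (X ^ i)) z :=
    HasDerivAt.fun_sum fun i _ ↦ hasDerivAt_mul_sub_of_continuousAt (hq i) (hL (X ^ i))
  rw [← map_eq_sum_range L' hdeg.self_of_nhds] at hsum
  refine hsum.congr_of_eventuallyEq (hdeg.mono fun t ht ↦ ?_)
  simp only [map_eq_sum_range (L _) ht, mul_sub, Finset.sum_sub_distrib]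

namespace IsMonicOrthogonal

section Continuity

variable {T K : Type*} [TopologicalSpace T] [Field K] [TopologicalSpace K] [IsTopologicalRing K]
  {L : T → K[X] →ₗ[K] K} {P : ℕ → T → K[X]} {z : T}

lemma continuousAt_map_mul_self (hP : ∀ᶠ t in 𝓝 z, IsMonicOrthogonal (L t) (P · t))
    (hL : ∀ p, ContinuousAt (fun t ↦ L t p) z) {n : ℕ}
    (hn : ∀ i, ContinuousAt (fun t ↦ (P n t).coeff i) z) :
    ContinuousAt (fun t ↦ L t (P n t * P n t)) z :=
  continuousAt_map hL
    (hP.mono fun _ ht ↦ natDegree_mul_le_of_le (ht.natDegree_eq n).le (ht.natDegree_eq n).le)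
    (continuousAt_coeff_mul hn hn)

variable [ContinuousInv₀ K]

lemma continuousAt_jacobiDiag (hP : ∀ᶠ t in 𝓝 z, IsMonicOrthogonal (L t) (P · t))
    (hL : ∀ p, ContinuousAt (fun t ↦ L t p) z) {n : ℕ}
    (hn : ∀ i, ContinuousAt (fun t ↦ (P n t).coeff i) z) :
    ContinuousAt (fun t ↦ jacobiDiag (P · t) n) z := by
  have hXPP : ContinuousAt (fun t ↦ L t (P n t * (X * P n t))) z :=
    continuousAt_map hL
      (hP.mono fun _ ht ↦ natDegree_mul_le_of_le (ht.natDegree_eq n).le (ht.natDegree_X_mul n).le)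
      (continuousAt_coeff_mul hn (continuousAt_coeff_mul (fun _ ↦ continuousAt_const) hn))
  refine (hXPP.div₀ (continuousAt_map_mul_self hP hL hn)
    (hP.self_of_nhds.map_mul_self_ne_zero n)).congr (hP.mono fun t ht ↦ ?_)
  exact (eq_div_of_mul_eq (ht.map_mul_self_ne_zero n) (ht.map_mul_X_mul_self n).symm).symm

lemma continuousAt_jacobiSubdiag (hP : ∀ᶠ t in 𝓝 z, IsMonicOrthogonal (L t) (P · t))
    (hL : ∀ p, ContinuousAt (fun t ↦ L t p) z) {n : ℕ}
    (hn : ∀ k ≤ n, ∀ i, ContinuousAt (fun t ↦ (P k t).coeff i) z) :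
    ContinuousAt (fun t ↦ jacobiSubdiag (L t) (P · t) n) z := by
  cases n with
  | zero => exact continuousAt_const
  | succ n =>
    exact (continuousAt_map_mul_self hP hL (hn _ le_rfl)).div₀
      (continuousAt_map_mul_self hP hL (hn _ n.le_succ)) (hP.self_of_nhds.map_mul_self_ne_zero n)

theorem continuousAt_coeff (hP : ∀ᶠ t in 𝓝 z, IsMonicOrthogonal (L t) (P · t))
    (hL : ∀ p, ContinuousAt (fun t ↦ L t p) z) (n i : ℕ) :
    ContinuousAt (fun t ↦ (P n t).coeff i) z := by
  induction n using Nat.strong_induction_on generalizing i with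
  | _ n ih =>
    cases n with
    | zero =>
      exact continuousAt_const.congr (hP.mono fun t ht ↦ congrArg (coeff · i) ht.zero_eq_one.symm)
    | succ n =>
      have hn := ih n n.lt_succ_self
      have hX : ContinuousAt (fun t ↦ (X * P n t).coeff i) z :=
        continuousAt_coeff_mul (fun _ ↦ continuousAt_const) hn i
      have hb := (continuousAt_jacobiDiag hP hL hn).mul (hn i)
      have ha := (continuousAt_jacobiSubdiag hP hL fun k hk ↦ ih k (Nat.lt_succ_of_le hk)).mul
        (ih (n - 1) (Nat.lt_succ_of_le (n.sub_le 1)) i)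
      refine ((hX.sub hb).sub ha).congr (hP.mono fun t ht ↦ ?_)
      have hrec := congrArg (coeff · i) (ht.X_mul_eq n)
      simp only [coeff_add, coeff_C_mul] at hrec
      simp only [Pi.sub_apply, Pi.mul_apply, hrec]
      ring

end Continuity

section Derivative

variable {L : 𝕜 → 𝕜[X] →ₗ[𝕜] 𝕜} {L' : 𝕜[X] →ₗ[𝕜] 𝕜} {P : ℕ → 𝕜 → 𝕜[X]} {z : 𝕜}

lemma hasDerivAt_map_mul_sub_map_mul
    (hP : ∀ᶠ t in 𝓝 z, IsMonicOrthogonal (L t) (P · t))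
    (hL : ∀ p, HasDerivAt (fun t ↦ L t p) (L' p) z) (m n : ℕ) :
    HasDerivAt (fun t ↦ L t (P m t * P n z) - L z (P m t * P n z)) (L' (P m z * P n z)) z :=
  hasDerivAt_map_sub_map hL
    (hP.mono fun _ ht ↦ natDegree_mul_le_of_le (ht.natDegree_eq m).le
      (hP.self_of_nhds.natDegree_eq n).le)
    (continuousAt_coeff_mul (continuousAt_coeff hP (fun p ↦ (hL p).continuousAt) m)
      fun _ ↦ continuousAt_const)

theorem hasDerivAt_map_mul_self (hP : ∀ᶠ t in 𝓝 z, IsMonicOrthogonal (L t) (P · t))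
    (hL : ∀ p, HasDerivAt (fun t ↦ L t p) (L' p) z) (n : ℕ) :
    HasDerivAt (fun t ↦ L t (P n t * P n t)) (L' (P n z * P n z)) z := by
  have hz := hP.self_of_nhds
  refine ((hasDerivAt_map_mul_sub_map_mul hP hL n n).add_const
    (L z (P n z * P n z))).congr_of_eventuallyEq (hP.mono fun t ht ↦ ?_)
  have hLt := ht.map_mul_of_natDegree_le (hz.natDegree_eq n).le
  have hLz := hz.map_mul_of_natDegree_le (ht.natDegree_eq n).le
  rw [hz.coeff_self, one_mul] at hLt
  rw [ht.coeff_self, one_mul, mul_comm] at hLz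
  simp only [hLt, hLz, sub_add_cancel]

theorem hasDerivAt_neg_nextCoeff (hP : ∀ᶠ t in 𝓝 z, IsMonicOrthogonal (L t) (P · t))
    (hL : ∀ p, HasDerivAt (fun t ↦ L t p) (L' p) z) (n : ℕ) :
    HasDerivAt (fun t ↦ -(P n t).nextCoeff) (ladderSub (L z) L' (P · z) n) z := by
  have hz := hP.self_of_nhds
  cases n with
  | zero =>
    refine (hasDerivAt_const z 0).congr_of_eventuallyEq (hP.mono fun t ht ↦ ?_)
    exact neg_eq_zero.mpr ht.nextCoeff_zero
  | succ n =>
    refine (((hasDerivAt_map_mul_sub_map_mul hP hL (n + 1) n).div_const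
      (L z (P n z * P n z))).sub_const (P (n + 1) z).nextCoeff).congr_of_eventuallyEq
      (hP.mono fun t ht ↦ ?_)
    have hLt : L t (P (n + 1) t * P n z) = 0 :=
      ht.map_mul_of_degree_lt (by rw [hz.degree_eq]; exact_mod_cast n.lt_succ_self)
    have hLz := hz.map_mul_of_natDegree_le_succ (ht.natDegree_eq (n + 1)).le
    rw [ht.coeff_self, one_mul, ← ht.nextCoeff_succ, mul_comm] at hLz
    have h₀ := hz.map_mul_self_ne_zero n
    simp only [hLt, hLz]
    field_simp
    ring

lemma hasDerivAt_jacobiSubdiag_succ (hP : ∀ᶠ t in 𝓝 z, IsMonicOrthogonal (L t) (P · t))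
    (hL : ∀ p, HasDerivAt (fun t ↦ L t p) (L' p) z) (n : ℕ) :
    HasDerivAt (fun t ↦ jacobiSubdiag (L t) (P · t) (n + 1))
      (jacobiSubdiag (L z) (P · z) (n + 1) *
        (ladderDiag (L z) L' (P · z) (n + 1) - ladderDiag (L z) L' (P · z) n))
      z := by
  have h₀ := hP.self_of_nhds.map_mul_self_ne_zero n
  have h₁ := hP.self_of_nhds.map_mul_self_ne_zero (n + 1)
  refine ((hasDerivAt_map_mul_self hP hL (n + 1)).div
    (hasDerivAt_map_mul_self hP hL n) h₀).congr_deriv ?_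
  simp only [jacobiSubdiag, ladderDiag]
  field_simp

end Derivative

end IsMonicOrthogonal

end Deformation

section SigmaForm

/-- The left-hand side of the `σ`-form of the Painlevé V equation, at the values `y`, `y'`, `y''` of
a function and its first two derivatives at the point `z`. -/
def sigmaPainleveV {K : Type*} [CommRing K] (α ν z y y' y'' : K) : K :=
  (z * y'') ^ 2 + 4 * y' ^ 2 * (ν - y') * (ν + α - y')
    - (ν * (ν + α) - y + (2 * y' + z - 2 * ν - α) * y') ^ 2

lemma sigmaPainleveV_eq_zero_of_ladder {K : Type*} [CommRing K] {α ν z y y' y'' a R₀ R₁ : K}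
    (ha : a = y - z * y') (hy'' : z * y'' = -(a * (R₁ - R₀))) (hsq : y' ^ 2 = a * R₁ * R₀)
    (hsum : a * (R₁ + R₀) = ν * (ν + α) - (2 * ν + α) * y' - a) :
    sigmaPainleveV α ν z y y' y'' = 0 := by
  have hy : y = a + z * y' := by rw [ha, sub_add_cancel]
  have hsum_sq := congrArg (· ^ 2) hsum
  rw [sigmaPainleveV, hy'', hy]
  linear_combination hsum_sq + 4 * a * hsq

open Filter Topology

namespace IsMonicOrthogonal

variable {𝕜 : Type*} [NontriviallyNormedField 𝕜] {α z : 𝕜} {w : 𝕜 → 𝕜} {L : 𝕜 → 𝕜[X] →ₗ[𝕜] 𝕜}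
  {P : ℕ → 𝕜 → 𝕜[X]}

lemma eventually_deriv_neg_nextCoeff
    (hP : ∀ᶠ t in 𝓝 z, IsMonicOrthogonal (L t) (P · t))
    (hL' : ∀ᶠ t in 𝓝 z, ∀ p, HasDerivAt (fun s ↦ L s p) (pointMass (w t) t p) t) (n : ℕ) :
    ∀ᶠ t in 𝓝 z, deriv (fun s ↦ -(P n s).nextCoeff) t =
      ladderSub (L t) (pointMass (w t) t) (P · t) n := by
  filter_upwards [hP.eventually_nhds, hL'] with t hPt hLt'
  exact (hasDerivAt_neg_nextCoeff hPt hLt' n).deriv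

lemma hasDerivAt_deriv_neg_nextCoeff
    (hP : ∀ᶠ t in 𝓝 z, IsMonicOrthogonal (L t) (P · t))
    (hL : ∀ᶠ t in 𝓝 z, IsTruncatedLaguerre α t (w t) (L t))
    (hL' : ∀ᶠ t in 𝓝 z, ∀ p, HasDerivAt (fun s ↦ L s p) (pointMass (w t) t p) t)
    (hz : z ≠ 0) (n : ℕ) :
    HasDerivAt (deriv fun t ↦ -(P (n + 1) t).nextCoeff)
      (-(jacobiSubdiag (L z) (P · z) (n + 1) * (ladderDiag (L z) (pointMass (w z) z) (P · z) (n + 1)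
        - ladderDiag (L z) (pointMass (w z) z) (P · z) n)) / z) z := by
  have hquot : deriv (fun t ↦ -(P (n + 1) t).nextCoeff) =ᶠ[𝓝 z]
      fun t ↦ (-(P (n + 1) t).nextCoeff - jacobiSubdiag (L t) (P · t) (n + 1)) / t := by
    filter_upwards [hP, hL, eventually_deriv_neg_nextCoeff hP hL' (n + 1),
      eventually_ne_nhds hz] with t hPt hLt hderiv ht
    rw [hderiv, hPt.jacobiSubdiag_eq hLt, sub_sub_cancel, mul_div_cancel_left₀ _ ht]
  have hy := hasDerivAt_neg_nextCoeff hP hL'.self_of_nhds (n + 1)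
  have ha := hasDerivAt_jacobiSubdiag_succ hP hL'.self_of_nhds n
  refine (((hy.sub ha).div (hasDerivAt_id z) hz).congr_of_eventuallyEq hquot).congr_deriv ?_
  have hstring := hP.self_of_nhds.jacobiSubdiag_eq hL.self_of_nhds (n + 1)
  simp only [Pi.sub_apply, id]
  field_simp
  linear_combination hstring

theorem sigmaPainleveV_neg_nextCoeff
    (hP : ∀ᶠ t in 𝓝 z, IsMonicOrthogonal (L t) (P · t))
    (hL : ∀ᶠ t in 𝓝 z, IsTruncatedLaguerre α t (w t) (L t))
    (hL' : ∀ᶠ t in 𝓝 z, ∀ p, HasDerivAt (fun s ↦ L s p) (pointMass (w t) t p) t)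
    (hz : z ≠ 0) (hw : w z ≠ 0) (heval : ∀ n, (P n z).eval z ≠ 0) (n : ℕ) :
    let y := fun t ↦ -(P n t).nextCoeff
    DifferentiableAt 𝕜 y z ∧ DifferentiableAt 𝕜 (deriv y) z ∧
      sigmaPainleveV α n z (y z) (deriv y z) (deriv (deriv y) z) = 0 := by
  intro y
  refine ⟨(hasDerivAt_neg_nextCoeff hP hL'.self_of_nhds n).differentiableAt, ?_⟩
  cases n with
  | zero =>
    have hy : y =ᶠ[𝓝 z] fun _ ↦ 0 := hP.mono fun t ht ↦ neg_eq_zero.mpr ht.nextCoeff_zero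
    have hy' : deriv y =ᶠ[𝓝 z] fun _ ↦ 0 := by simpa using hy.deriv
    refine ⟨hy'.differentiableAt_iff.mpr (differentiableAt_const 0), ?_⟩
    simp [sigmaPainleveV, hy.eq_of_nhds, hy'.eq_of_nhds, hy'.deriv_eq]
  | succ n =>
    have hPz := hP.self_of_nhds
    have hLz := hL.self_of_nhds
    have hy' := (hasDerivAt_neg_nextCoeff hP hL'.self_of_nhds (n + 1)).deriv
    have hy'' := hasDerivAt_deriv_neg_nextCoeff hP hL hL' hz n
    refine ⟨hy''.differentiableAt, ?_⟩
    rw [hy''.deriv, hy']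
    exact sigmaPainleveV_eq_zero_of_ladder (hPz.jacobiSubdiag_eq hLz (n + 1))
      (mul_div_cancel₀ _ hz) (hPz.ladderSub_succ_sq n)
      (hPz.jacobiSubdiag_succ_mul_ladderDiag_add hLz
        (fun k ↦ hPz.ladderDiag_ne_zero hw (heval k)) n)

end IsMonicOrthogonal

end SigmaForm

section WeightFunctional

variable {w : ℝ → ℝ} {a b : ℝ}

lemma intervalIntegrable_eval_mul (hw : IntervalIntegrable w volume a b) (p : ℝ[X]) :
    IntervalIntegrable (fun x ↦ p.eval x * w x) volume a b :=
  hw.continuousOn_mul p.continuous.continuousOn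

/-- The moment functional `p ↦ ∫ x in a..b, p x * w x` of a weight `w`. -/
noncomputable def weightFunctional (hw : IntervalIntegrable w volume a b) : ℝ[X] →ₗ[ℝ] ℝ where
  toFun p := ∫ x in a..b, p.eval x * w x
  map_add' p q := by
    simp only [eval_add, add_mul]
    exact integral_add (intervalIntegrable_eval_mul hw p) (intervalIntegrable_eval_mul hw q)
  map_smul' c p := by
    simp only [eval_smul, smul_mul_assoc, intervalIntegral.integral_smul, RingHom.id_apply]

lemma weightFunctional_apply (hw : IntervalIntegrable w volume a b) (p : ℝ[X]) :
    weightFunctional hw p = ∫ x in a..b, p.eval x * w x := rfl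

lemma weightFunctional_pos (hw : IntervalIntegrable w volume a b) (hab : a < b)
    (hpos : ∀ x ∈ Set.Ioo a b, 0 < w x) {p : ℝ[X]} (hp : p ≠ 0)
    (hp_nonneg : ∀ x ∈ Set.Ioo a b, 0 ≤ p.eval x) : 0 < weightFunctional hw p := by
  have hnonneg : 0 ≤ᵐ[volume.restrict (Set.uIoc a b)] fun x ↦ p.eval x * w x := by
    rw [Set.uIoc_of_le hab.le, ← restrict_Ioo_eq_restrict_Ioc]
    exact (ae_restrict_mem measurableSet_Ioo).mono fun x hx ↦
      mul_nonneg (hp_nonneg x hx) (hpos x hx).le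
  rw [weightFunctional_apply, integral_pos_iff_support_of_nonneg_ae' hnonneg
    (intervalIntegrable_eval_mul hw p)]
  refine ⟨hab, ?_⟩
  calc 0 < volume (Set.Ioo a b) := by simpa using hab
    _ = volume (Set.Ioo a b \ p.rootSet ℝ) :=
      (measure_sdiff_null ((p.rootSet_finite ℝ).measure_zero _)).symm
    _ ≤ volume (Function.support (fun x ↦ p.eval x * w x) ∩ Set.Ioc a b) := by
      refine measure_mono fun x hx ↦ ⟨mul_ne_zero (fun h ↦ hx.2 ?_) (hpos x hx.1).ne',
        Set.Ioo_subset_Ioc_self hx.1⟩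
      rwa [mem_rootSet_of_ne hp, coe_aeval_eq_eval]

lemma isMonicOrthogonal_weightFunctional (hw : IntervalIntegrable w volume a b) (hab : a < b)
    (hpos : ∀ x ∈ Set.Ioo a b, 0 < w x) {P : ℕ → ℝ[X]} (hmonic : ∀ n, (P n).Monic)
    (hdeg : ∀ n, (P n).natDegree = n)
    (horth : ∀ m n, m ≠ n → ∫ x in a..b, (P m).eval x * (P n).eval x * w x = 0) :
    IsMonicOrthogonal (weightFunctional hw) P where
  monic := hmonic
  natDegree_eq := hdeg
  map_mul_of_ne {m n} h := by
    simpa only [weightFunctional_apply, eval_mul] using horth m n h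
  map_mul_self_ne_zero n :=
    (weightFunctional_pos hw hab hpos (mul_self_ne_zero.mpr (hmonic n).ne_zero) fun x _ ↦ by
      rw [eval_mul]
      exact mul_self_nonneg _).ne'

lemma IsMonicOrthogonal.eval_right_ne_zero {hw : IntervalIntegrable w volume a b} (hab : a < b)
    (hpos : ∀ x ∈ Set.Ioo a b, 0 < w x) {P : ℕ → ℝ[X]}
    (hP : IsMonicOrthogonal (weightFunctional hw) P) (n : ℕ) : (P n).eval b ≠ 0 := by
  intro hroot
  obtain ⟨q, hq⟩ := dvd_iff_isRoot.mpr hroot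
  have hq₀ : q ≠ 0 := fun h ↦ (hP.monic n).ne_zero (by rw [hq, h, mul_zero])
  have hdeg : q.degree < n := by
    rw [← hP.degree_eq, hq, degree_mul, degree_X_sub_C, degree_eq_natDegree hq₀]
    exact_mod_cast Nat.lt_add_of_pos_left one_pos
  have hneg : 0 < weightFunctional hw ((C b - X) * (q * q)) := by
    refine weightFunctional_pos hw hab hpos ?_ fun x hx ↦ ?_
    · exact mul_ne_zero (sub_ne_zero.mpr (X_ne_C b).symm) (mul_self_ne_zero.mpr hq₀)
    · simp only [eval_mul, eval_sub, eval_C, eval_X]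
      exact mul_nonneg (sub_nonneg.mpr hx.2.le) (mul_self_nonneg _)
  have hfactor : (C b - X) * (q * q) = -(P n * q) := by
    rw [hq]
    ring
  rw [hfactor, map_neg, hP.map_mul_of_degree_lt hdeg, neg_zero] at hneg
  exact hneg.false

lemma hasDerivAt_weightFunctional (hw : ∀ t, IntervalIntegrable w volume a t) {S : Set ℝ}
    (hS : IsOpen S) (hcont : ContinuousOn w S) {z : ℝ} (hz : z ∈ S) (p : ℝ[X]) :
    HasDerivAt (fun t ↦ weightFunctional (hw t) p) (pointMass (w z) z p) z := by
  have hpw : ContinuousOn (fun x ↦ p.eval x * w x) S := p.continuous.continuousOn.mul hcont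
  rw [pointMass_apply, mul_comm]
  exact integral_hasDerivAt_right (intervalIntegrable_eval_mul (hw z) p)
    (hpw.stronglyMeasurableAtFilter hS z hz) (hpw.continuousAt (hS.mem_nhds hz))

end WeightFunctional

section Laguerre

open Filter Topology

/-- The Laguerre weight `x ^ α * exp (-x)`. -/
noncomputable def laguerreWeight (α x : ℝ) : ℝ := x ^ α * Real.exp (-x)

lemma laguerreWeight_pos (α : ℝ) {x : ℝ} (hx : 0 < x) : 0 < laguerreWeight α x :=
  mul_pos (Real.rpow_pos_of_pos hx α) (Real.exp_pos _)

lemma continuousOn_laguerreWeight (α : ℝ) : ContinuousOn (laguerreWeight α) (Set.Ioi 0) :=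
  (continuousOn_id.rpow_const fun _ hx ↦ Or.inl (ne_of_gt hx)).mul
    (Real.continuous_exp.comp continuous_neg).continuousOn

lemma intervalIntegrable_laguerreWeight {α : ℝ} (hα : -1 < α) (a b : ℝ) :
    IntervalIntegrable (laguerreWeight α) volume a b :=
  (intervalIntegrable_rpow' hα).mul_continuousOn
    (Real.continuous_exp.comp continuous_neg).continuousOn

lemma hasDerivAt_mul_laguerreWeight_mul_eval (α : ℝ) (f : ℝ[X]) {x : ℝ} (hx : 0 < x) :
    HasDerivAt (fun x ↦ laguerreWeight (α + 1) x * f.eval x)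
      (((C (1 + α) - X) * f + X * derivative f).eval x * laguerreWeight α x) x := by
  have hpow := Real.hasDerivAt_rpow_const (p := α + 1) (Or.inl hx.ne')
  refine ((hpow.mul (hasDerivAt_neg x).exp).mul (f.hasDerivAt x)).congr_deriv ?_
  simp only [laguerreWeight, eval_add, eval_sub, eval_mul, eval_C, eval_X, add_sub_cancel_right,
    Real.rpow_add_one hx.ne', Pi.mul_apply]
  ring

lemma isTruncatedLaguerre_weightFunctional {α z : ℝ} (hα : -1 < α) (hz : 0 < z) :
    IsTruncatedLaguerre α z (laguerreWeight α z)
      (weightFunctional (intervalIntegrable_laguerreWeight hα 0 z)) := by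
  intro f
  have hcont : ContinuousOn (fun x ↦ laguerreWeight (α + 1) x * f.eval x) (Set.Icc 0 z) :=
    (((Real.continuous_rpow_const (by linarith)).mul
      (Real.continuous_exp.comp continuous_neg)).mul f.continuous).continuousOn
  rw [weightFunctional_apply, integral_eq_sub_of_hasDerivAt_of_le hz.le hcont
    (fun x hx ↦ hasDerivAt_mul_laguerreWeight_mul_eval α f hx.1)
    (intervalIntegrable_eval_mul (intervalIntegrable_laguerreWeight hα 0 z) _)]
  simp only [laguerreWeight, pointMass_apply, Real.zero_rpow (neg_lt_iff_pos_add.mp hα).ne',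
    Real.rpow_add_one hz.ne']
  ring

theorem truncated_laguerre_painleveV_general (α : ℝ) (hα : -1 < α)
    (P : ℕ → ℝ → Polynomial ℝ)
    (hP_monic : ∀ n z, 0 < z → (P n z).Monic)
    (hP_deg : ∀ n z, 0 < z → (P n z).natDegree = n)
    (hP_orth : ∀ m n z, 0 < z → m ≠ n →
      ∫ x in (0 : ℝ)..z, (P m z).eval x * (P n z).eval x * x ^ α * Real.exp (-x) = 0)
    (σ : ℕ → ℝ → ℝ)
    (hσ0 : ∀ z, σ 0 z = 0)
    (hσ : ∀ n z, σ (n + 1) z = -((P (n + 1) z).coeff n))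
    (n : ℕ) (z : ℝ) (hz : 0 < z) :
    DifferentiableAt ℝ (σ n) z ∧ DifferentiableAt ℝ (deriv (σ n)) z ∧
      sigmaPainleveV α n z (σ n z) (deriv (σ n) z) (deriv (deriv (σ n)) z) = 0 := by
  have hw (t : ℝ) := intervalIntegrable_laguerreWeight hα 0 t
  have hpos (t : ℝ) : ∀ x ∈ Set.Ioo 0 t, 0 < laguerreWeight α x :=
    fun x hx ↦ laguerreWeight_pos α hx.1
  have hP (t : ℝ) (ht : 0 < t) : IsMonicOrthogonal (weightFunctional (hw t)) (P · t) :=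
    isMonicOrthogonal_weightFunctional (hw t) ht (hpos t) (hP_monic · t ht) (hP_deg · t ht)
      fun m n h ↦ by simpa only [laguerreWeight, mul_assoc] using hP_orth m n t ht h
  have hσP : σ n =ᶠ[𝓝 z] fun t ↦ -(P n t).nextCoeff := by
    filter_upwards [eventually_gt_nhds hz] with t ht
    cases n with
    | zero => rw [hσ0, (hP t ht).nextCoeff_zero, neg_zero]
    | succ n => rw [hσ, (hP t ht).nextCoeff_succ]
  obtain ⟨hdiff, hdiff', hode⟩ := IsMonicOrthogonal.sigmaPainleveV_neg_nextCoeff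
    ((eventually_gt_nhds hz).mono hP)
    ((eventually_gt_nhds hz).mono fun _ ↦ isTruncatedLaguerre_weightFunctional hα)
    ((eventually_gt_nhds hz).mono fun _ ↦
      hasDerivAt_weightFunctional hw isOpen_Ioi (continuousOn_laguerreWeight α))
    hz.ne' (laguerreWeight_pos α hz).ne' ((hP z hz).eval_right_ne_zero hz (hpos z)) n
  refine ⟨hσP.differentiableAt_iff.mpr hdiff, hσP.deriv.differentiableAt_iff.mpr hdiff', ?_⟩
  rw [hσP.deriv.deriv_eq, hσP.deriv_eq, hσP.eq_of_nhds]
  exact hode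

end Laguerre

/-- The subleading coefficient `σ_n(z)` of the monic truncated Laguerre polynomial
`P_n(x;z)` solves a nonlinear ODE (a form of the Painlevé V equation). -/
theorem truncated_laguerre_painleveV (α : ℝ) (hα : -1 < α)
    (P : ℕ → ℝ → Polynomial ℝ)
    (hP_monic : ∀ n z, 0 < z → (P n z).Monic)
    (hP_deg : ∀ n z, 0 < z → (P n z).natDegree = n)
    (hP_orth : ∀ m n z, 0 < z → m ≠ n →
      ∫ x in (0:ℝ)..z, (P m z).eval x * (P n z).eval x * x ^ α * Real.exp (-x) = 0)
    (hdiff : ∀ n k, ContDiffOn ℝ 2 (fun z => (P n z).coeff k) (Set.Ioi 0))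
    (σ : ℕ → ℝ → ℝ)
    (hσ0 : ∀ z, σ 0 z = 0)
    (hσ : ∀ n z, σ (n + 1) z = -((P (n + 1) z).coeff n)) :
    ∀ n : ℕ, ∀ z : ℝ, 0 < z →
      (z * deriv (deriv (σ n)) z) ^ 2
        + 4 * (deriv (σ n) z) ^ 2 * ((n : ℝ) - deriv (σ n) z) * ((n : ℝ) + α - deriv (σ n) z)
        - ((n : ℝ) * ((n : ℝ) + α) - σ n z
            + (2 * deriv (σ n) z + z - 2 * (n : ℝ) - α) * deriv (σ n) z) ^ 2 = 0 :=
  fun n z hz ↦ (truncated_laguerre_painleveV_general α hα P hP_monic hP_deg hP_orth σ hσ0 hσ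
    n z hz).2.2
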